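/- arXiv:1910.12341 — 2 statements merged into one kernel-verified Lean document; each statement's English description precedes it below -/
import Mathlib

section
/- Let $X$ be a standard Borel space with a Borel probability measure $\mu$ and let $T: X \to X$ be a $\mu$-measurable map preserving $\mu$ (i.e. $T_*\mu = \mu$). Let $Y$ be a Polish space and let $S: Y \to Y$ be a continuous map. Let $p: Y \to X$ be a Borel map such that $p \circ S = T \circ p$ and $\mu(p(Y)) = 1$. Suppose that for $\mu$-almost all $x \in X$ the fiber $p^{-1}(x)$ is compact. Then there exists a Borel probability measure $\nu$ on $Y$ which is $S$-invariant (i.e. $S_*\nu = \nu$) and satisfies $p_*\nu = \mu$. -/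
open MeasureTheory
open Set Filter Topology TopologicalSpace
open scoped ENNReal

/-!
A measurable section of `p` pushes `μ` to a lift `ν`, and the Cesàro averages of the measures
`(S^k)_* ν` are again lifts of `μ`. By Krylov–Bogoliubov, any weak limit of these averages is
`S`-invariant, so what is needed is that the lifts of `μ` form a weakly compact set, even though
`p` is not continuous. This is where the compactness of the fibers enters: after a change of the
Polish topology of `X`, the set-valued map `x ↦ p ⁻¹' {x}` is upper hemicontinuous on a set of full
measure, so that the preimage under `p` of a compact subset `F` of that set is compact. All lifts
give `p ⁻¹' F` the mass `μ F`, which is as close to `1` as we like; hence they form a tight family,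
and since `p ⁻¹' F` is closed its mass cannot drop in a weak limit.
-/

section MeasurableSelection

theorem eq_of_forall_mem_closure_image_cylinder {X : Type*} [TopologicalSpace X] [T2Space X]
    {f : (ℕ → ℕ) → X} {z : ℕ → ℕ} (hf : ContinuousAt f z) {x : X}
    (hx : ∀ n, x ∈ closure (f '' PiNat.cylinder z n)) : f z = x := by
  by_contra hne
  obtain ⟨U, V, hU, hV, hzU, hxV, hUV⟩ := t2_separation hne
  obtain ⟨_, ⟨w, n, rfl⟩, hzn, hn⟩ :=
    (PiNat.isTopologicalBasis_cylinders fun _ => ℕ).mem_nhds_iff.1 (hf (hU.mem_nhds hzU))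
  rw [← PiNat.mem_cylinder_iff_eq.1 hzn] at hn
  obtain ⟨_, hyV, y, hy, rfl⟩ := mem_closure_iff.1 (hx n) V hV hxV
  exact hUV.notMem_of_mem_left (hn hy) hyV

variable {X : Type*} [MeasurableSpace X]

theorem exists_measurable_nat_mem {B : ℕ → Set X} (hB : ∀ k, MeasurableSet (B k)) :
    ∃ g : X → ℕ, Measurable g ∧ ∀ x ∈ ⋃ k, B k, x ∈ B (g x) := by
  classical
  have hex (x : X) : ∃ k, x ∈ ⋃ j, B j → x ∈ B k := by
    by_cases h : x ∈ ⋃ j, B j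
    · exact (mem_iUnion.1 h).imp fun k hk _ => hk
    · exact ⟨0, fun hx => absurd hx h⟩
  have hmeas (k : ℕ) : MeasurableSet {x | x ∈ ⋃ j, B j → x ∈ B k} :=
    (MeasurableSet.iUnion hB).imp (hB k)
  exact ⟨fun x => Nat.find (hex x), measurable_find hex hmeas, fun x => Nat.find_spec (hex x)⟩

theorem exists_measurable_branch {B : List ℕ → Set X} (hB : ∀ σ, MeasurableSet (B σ)) :
    ∃ s : X → ℕ → ℕ, Measurable s ∧ ∀ x ∈ B [], (∀ σ, x ∈ B σ → x ∈ ⋃ k, B (k :: σ)) →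
      ∀ n, x ∈ B (PiNat.res (s x) n) := by
  choose g hg hgB using fun σ : List ℕ => exists_measurable_nat_mem fun k => hB (k :: σ)
  let pre (x : X) : ℕ → List ℕ := Nat.rec [] fun _ σ => g σ x :: σ
  let s (x : X) (n : ℕ) : ℕ := g (pre x n) x
  have res_s (x : X) (n : ℕ) : PiNat.res (s x) n = pre x n := by
    induction n with
    | zero => rfl
    | succ n ih => rw [PiNat.res_succ, ih]
  let : MeasurableSpace (List ℕ) := ⊤
  have : DiscreteMeasurableSpace (List ℕ) := ⟨fun _ => trivial⟩
  have hg' : Measurable fun q : List ℕ × X => g q.1 q.2 := measurable_from_prod_countable_right hg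
  have hpre (n : ℕ) : Measurable fun x => pre x n := by
    induction n with
    | zero => exact measurable_const
    | succ n ih =>
      exact (Measurable.of_discrete (f := fun q : ℕ × List ℕ => q.1 :: q.2)).comp
        ((hg'.comp (ih.prodMk measurable_id)).prodMk ih)
  refine ⟨s, measurable_pi_lambda _ fun n => hg'.comp ((hpre n).prodMk measurable_id),
    fun x hx hstep n => ?_⟩
  rw [res_s]
  induction n with
  | zero => exact hx
  | succ n ih => exact hgB _ x (hstep _ ih)

theorem toMeasurable_ae_le {μ : Measure X} [SFinite μ] {s t : Set X} (ht : MeasurableSet t)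
    (hst : s ⊆ t) : toMeasurable μ s ≤ᵐ[μ] t := by
  rw [ae_le_set, sdiff_eq, Measure.measure_toMeasurable_inter_of_sFinite ht.compl,
    ← sdiff_eq, sdiff_eq_empty.2 hst, measure_empty]

/-- Asserting `f (s x) = x` on the measurable hull of `range f` makes `range f` almost equal to its
hull, hence null measurable. -/
theorem exists_measurable_ae_rightInverse_of_continuous [TopologicalSpace X] [T2Space X]
    [OpensMeasurableSpace X] (μ : Measure X) [SFinite μ] {f : (ℕ → ℕ) → X} (hf : Continuous f) :
    ∃ s : X → ℕ → ℕ, Measurable s ∧ ∀ᵐ x ∂μ, x ∈ toMeasurable μ (range f) → f (s x) = x := by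
  let A (σ : List ℕ) : Set X := f '' {z | PiNat.res z σ.length = σ}
  -- Minimality of the hulls makes almost every point of `B σ` lie in some `B (k :: σ)`, and the
  -- closures force `f` to map a branch through the `B σ` containing `x` to `x`.
  let B (σ : List ℕ) : Set X := toMeasurable μ (A σ) ∩ closure (A σ)
  have hB (σ : List ℕ) : MeasurableSet (B σ) :=
    (measurableSet_toMeasurable _ _).inter isClosed_closure.measurableSet
  have hAB (σ : List ℕ) : A σ ⊆ B σ := subset_inter (subset_toMeasurable _ _) subset_closure
  have hA_nil : A [] = range f := by simp [A]
  have hA_cons (σ : List ℕ) : A σ ⊆ ⋃ k, A (k :: σ) := by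
    rintro _ ⟨z, hz, rfl⟩
    exact mem_iUnion.2 ⟨z σ.length, z, by simpa using hz, rfl⟩
  have hroot : toMeasurable μ (range f) ≤ᵐ[μ] B [] :=
    toMeasurable_ae_le (hB []) (hA_nil ▸ hAB [])
  have hstep (σ : List ℕ) : toMeasurable μ (A σ) ≤ᵐ[μ] ⋃ k, B (k :: σ) :=
    toMeasurable_ae_le (.iUnion fun k => hB _) ((hA_cons σ).trans (iUnion_mono fun k => hAB _))
  obtain ⟨s, hs, hsB⟩ := exists_measurable_branch hB
  refine ⟨s, hs, ?_⟩
  filter_upwards [hroot, ae_all_iff.2 hstep] with x hx_root hx_step hx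
  refine eq_of_forall_mem_closure_image_cylinder hf.continuousAt fun n => ?_
  have hx_closure := (hsB x (hx_root hx) (fun σ hσ => hx_step σ hσ.1) n).2
  simpa [A, PiNat.cylinder_eq_res] using hx_closure

theorem nullMeasurableSet_of_analyticSet [TopologicalSpace X] [T2Space X]
    [OpensMeasurableSpace X] {μ : Measure X} [SFinite μ] {s : Set X}
    (hs : AnalyticSet s) : NullMeasurableSet s μ := by
  rw [AnalyticSet] at hs
  obtain rfl | ⟨f, hf, rfl⟩ := hs
  · exact MeasurableSet.empty.nullMeasurableSet
  obtain ⟨g, -, hg⟩ := exists_measurable_ae_rightInverse_of_continuous μ hf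
  have hle : toMeasurable μ (range f) ≤ᵐ[μ] range f := hg.mono fun x hx hxf => ⟨g x, hx hxf⟩
  exact (measurableSet_toMeasurable μ _).nullMeasurableSet.congr
    (hle.antisymm (subset_toMeasurable μ _).eventuallyLE)

theorem nullMeasurableSet_image {Y : Type*} [StandardBorelSpace X] [MeasurableSpace Y]
    [StandardBorelSpace Y] {μ : Measure X} [SFinite μ] {p : Y → X} (hp : Measurable p) {s : Set Y}
    (hs : MeasurableSet s) : NullMeasurableSet (p '' s) μ := by
  let := upgradeStandardBorel X
  exact nullMeasurableSet_of_analyticSet (hs.analyticSet_image hp)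

/-- A form of the Jankov–von Neumann uniformization theorem. -/
theorem exists_measurable_ae_rightInverse {Y : Type*} [StandardBorelSpace X] [MeasurableSpace Y]
    [StandardBorelSpace Y] [Nonempty Y] {μ : Measure X} [SFinite μ] {p : Y → X} (hp : Measurable p)
    (hrange : ∀ᵐ x ∂μ, x ∈ range p) :
    ∃ s : X → Y, Measurable s ∧ ∀ᵐ x ∂μ, p (s x) = x := by
  let := upgradeStandardBorel X
  let := upgradeStandardBorel Y
  have hgraph : AnalyticSet (range fun y => (y, p y)) := by
    rw [← image_univ]
    exact MeasurableSet.univ.analyticSet_image (measurable_id.prodMk hp)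
  rw [AnalyticSet] at hgraph
  obtain hempty | ⟨F, hF, hF_range⟩ := hgraph
  · exact absurd hempty (range_nonempty _).ne_empty
  have hF_graph (z : ℕ → ℕ) : p (F z).1 = (F z).2 := by
    obtain ⟨y, hy⟩ := hF_range.subset (mem_range_self z)
    rw [← hy]
  obtain ⟨s, hs, hs_inv⟩ := exists_measurable_ae_rightInverse_of_continuous μ
    (continuous_snd.comp hF)
  refine ⟨fun x => (F (s x)).1, (continuous_fst.comp hF).measurable.comp hs, ?_⟩
  filter_upwards [hrange, hs_inv] with x hx hsx
  rw [hF_graph]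
  refine hsx (subset_toMeasurable μ _ ?_)
  obtain ⟨y, rfl⟩ := hx
  obtain ⟨z, hz⟩ := hF_range.superset (mem_range_self y)
  exact ⟨z, congrArg Prod.snd hz⟩

end MeasurableSelection

section CompactPreimages

theorem exists_countable_isOpen_forall_isCompact_subset (Y : Type*) [TopologicalSpace Y]
    [SecondCountableTopology Y] :
    ∃ 𝒰 : Set (Set Y), 𝒰.Countable ∧ (∀ U ∈ 𝒰, IsOpen U) ∧
      ∀ K V, IsCompact K → IsOpen V → K ⊆ V → ∃ U ∈ 𝒰, K ⊆ U ∧ U ⊆ V := by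
  refine ⟨sUnion '' {t | t.Finite ∧ t ⊆ countableBasis Y},
    (countable_ofPred_finite_subset (countable_countableBasis Y)).image _, ?_, ?_⟩
  · rintro _ ⟨t, ⟨-, ht⟩, rfl⟩
    exact isOpen_sUnion fun U hU => isOpen_of_mem_countableBasis (ht hU)
  · intro K V hK hV hKV
    obtain ⟨B, hB, rfl⟩ := (isBasis_countableBasis Y).open_eq_sUnion hV
    obtain ⟨t, htB, ht, hKt⟩ := hK.elim_finite_subcover_image (c := id)
      (fun U hU => isOpen_of_mem_countableBasis (hB hU)) (hKV.trans_eq sUnion_eq_biUnion)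
    exact ⟨⋃₀ t, ⟨t, ⟨ht, htB.trans hB⟩, rfl⟩, hKt.trans_eq sUnion_eq_biUnion.symm,
      sUnion_subset_sUnion htB⟩

theorem exists_polishSpace_forall_isOpen {X ι : Type*} [MeasurableSpace X] [StandardBorelSpace X]
    [Countable ι] {B : ι → Set X} (hB : ∀ i, MeasurableSet (B i)) :
    ∃ _ : TopologicalSpace X, BorelSpace X ∧ PolishSpace X ∧ ∀ i, IsOpen (B i) := by
  let := upgradeStandardBorel X
  choose τ hτ_le hτ_polish _ hτ_open using fun i => (hB i).isClopenable
  obtain ⟨τ', hτ'_le, hle, hτ'_polish⟩ := PolishSpace.exists_polishSpace_forall_le τ hτ_le hτ_polish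
  refine ⟨τ', ?_, hτ'_polish, fun i => hτ'_le i _ (hτ_open i)⟩
  constructor
  rw [eq_borel_upgradeStandardBorel X, borel_eq_borel_of_le hτ'_polish _ hle]
  infer_instance

/-- A version of Lusin's theorem for set-valued maps. -/
theorem exists_polishSpace_upperHemicontinuousOn {X Y : Type*} [MeasurableSpace X]
    [StandardBorelSpace X] [TopologicalSpace Y] [SecondCountableTopology Y] {μ : Measure X}
    {Φ : X → Set Y} (hΦ : ∀ U, IsOpen U → NullMeasurableSet {x | Φ x ⊆ U} μ)
    (hcompact : ∀ᵐ x ∂μ, IsCompact (Φ x)) :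
    ∃ _ : TopologicalSpace X, BorelSpace X ∧ PolishSpace X ∧ ∃ G, MeasurableSet G ∧
      (∀ᵐ x ∂μ, x ∈ G) ∧ (∀ x ∈ G, IsCompact (Φ x)) ∧ UpperHemicontinuousOn Φ G := by
  obtain ⟨𝒰, h𝒰, h𝒰_open, hsep⟩ := exists_countable_isOpen_forall_isCompact_subset Y
  have := h𝒰.to_subtype
  choose B hB hΦB using fun U : 𝒰 => hΦ U (h𝒰_open U U.2)
  have hΦB_all : ∀ᵐ x ∂μ, ∀ U : 𝒰, Φ x ⊆ U ↔ x ∈ B U := ae_all_iff.2 fun U => (hΦB U).mem_iff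
  obtain ⟨G, hG_mem, hG, hG_prop⟩ := (hcompact.and hΦB_all).exists_measurable_mem
  obtain ⟨τ, hτ_borel, hτ_polish, hB_open⟩ := exists_polishSpace_forall_isOpen hB
  refine ⟨τ, hτ_borel, hτ_polish, G, hG, hG_mem, fun x hx => (hG_prop x hx).1, ?_⟩
  refine .of_forall_isOpen fun x hx V hV hxV => ?_
  obtain ⟨U, hU, hxU, hUV⟩ := hsep (Φ x) V (hG_prop x hx).1 hV hxV
  have hxB : x ∈ B ⟨U, hU⟩ := ((hG_prop x hx).2 ⟨U, hU⟩).1 hxU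
  filter_upwards [mem_nhdsWithin_of_mem_nhds ((hB_open _).mem_nhds hxB), self_mem_nhdsWithin]
    with x' hx'B hx'
  exact (((hG_prop x' hx').2 ⟨U, hU⟩).2 hx'B).trans hUV

theorem isCompact_biUnion_of_upperHemicontinuousOn {X Y : Type*} [TopologicalSpace X]
    [TopologicalSpace Y] {Φ : X → Set Y} {K : Set X} (hK : IsCompact K)
    (hΦ : UpperHemicontinuousOn Φ K) (hcompact : ∀ x ∈ K, IsCompact (Φ x)) :
    IsCompact (⋃ x ∈ K, Φ x) := by
  classical
  refine isCompact_of_finite_subcover fun {ι} U hU hcover => ?_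
  refine hK.induction_on (p := fun s => ∃ t : Finset ι, ⋃ x ∈ s, Φ x ⊆ ⋃ i ∈ t, U i)
    ⟨∅, by simp⟩ ?_ ?_ ?_
  · exact fun s s' hss' => .imp fun t ht => (biUnion_subset_biUnion_left hss').trans ht
  · rintro s s' ⟨t, ht⟩ ⟨t', ht'⟩
    refine ⟨t ∪ t', ?_⟩
    rw [biUnion_union, Finset.set_biUnion_union]
    exact union_subset_union ht ht'
  · intro x hx
    obtain ⟨t, ht⟩ := (hcompact x hx).elim_finite_subcover U hU
      ((subset_biUnion_of_mem hx).trans hcover)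
    exact ⟨_, hΦ.forall_isOpen x hx _ (isOpen_biUnion fun i _ => hU i) ht, t,
      iUnion₂_subset fun _ h => h⟩

theorem exists_measurableSet_isCompact_preimage {X Y : Type*} [MeasurableSpace X]
    [StandardBorelSpace X] [TopologicalSpace Y] [PolishSpace Y] [MeasurableSpace Y] [BorelSpace Y]
    {μ : Measure X} [IsFiniteMeasure μ] {p : Y → X} (hp : Measurable p)
    (hfib : ∀ᵐ x ∂μ, IsCompact (p ⁻¹' {x})) {A : Set X} (hA : MeasurableSet A)
    {r : ℝ≥0∞} (hr : r < μ A) :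
    ∃ F ⊆ A, MeasurableSet F ∧ r < μ F ∧ IsCompact (p ⁻¹' F) := by
  have hfib_meas (U : Set Y) (hU : IsOpen U) : NullMeasurableSet {x | p ⁻¹' {x} ⊆ U} μ := by
    have h := (nullMeasurableSet_image (μ := μ) hp hU.measurableSet.compl).compl
    rwa [← kernImage_eq_compl] at h
  obtain ⟨τ, _, _, G, hG, hG_ae, hG_compact, hG_uhc⟩ :=
    exists_polishSpace_upperHemicontinuousOn hfib_meas hfib
  have hrAG : r < μ (A ∩ G) := by rwa [inter_comm, Measure.measure_inter_eq_of_ae hG_ae]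
  obtain ⟨F, hFAG, hF, hrF⟩ :=
    (hA.inter hG).exists_lt_isCompact_of_ne_top (measure_ne_top _ _) hrAG
  have hFG : F ⊆ G := hFAG.trans inter_subset_right
  refine ⟨F, hFAG.trans inter_subset_left, hF.measurableSet, hrF, ?_⟩
  rw [← biUnion_preimage_singleton]
  exact isCompact_biUnion_of_upperHemicontinuousOn hF (hG_uhc.mono hFG)
    fun x hx => hG_compact x (hFG hx)

end CompactPreimages

section Lifts

variable {X Y : Type*} [MeasurableSpace X] [StandardBorelSpace X] [TopologicalSpace Y]
  [PolishSpace Y] [MeasurableSpace Y] [BorelSpace Y] {μ : Measure X} [IsProbabilityMeasure μ]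
  {p : Y → X}

theorem isTightMeasureSet_lifts (hp : Measurable p) (hfib : ∀ᵐ x ∂μ, IsCompact (p ⁻¹' {x})) :
    IsTightMeasureSet {ν : Measure Y | ν.map p = μ} := by
  rw [isTightMeasureSet_iff_exists_isCompact_measure_compl_le]
  intro ε hε
  obtain ⟨F, -, hF, hεF, hK⟩ := exists_measurableSet_isCompact_preimage hp hfib .univ
    (r := 1 - ε) (by simpa using ENNReal.sub_lt_self ENNReal.one_ne_top one_ne_zero hε.ne')
  refine ⟨p ⁻¹' F, hK, fun ν hν => ?_⟩
  calc ν (p ⁻¹' F)ᶜ = μ Fᶜ := by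
        rw [← preimage_compl, ← Measure.map_apply hp hF.compl, mem_ofPred.1 hν]
    _ = 1 - μ F := prob_compl_eq_one_sub hF
    _ ≤ ε := tsub_le_iff_tsub_le.1 hεF.le

theorem isClosed_lifts (hp : Measurable p) (hfib : ∀ᵐ x ∂μ, IsCompact (p ⁻¹' {x})) :
    IsClosed {ν : ProbabilityMeasure Y | (ν : Measure Y).map p = μ} := by
  refine isClosed_of_closure_subset fun ν₀ hν₀ => ?_
  have := mem_closure_iff_nhdsWithin_neBot.1 hν₀
  have := (ν₀ : Measure Y).isProbabilityMeasure_map hp.aemeasurable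
  suffices hle : μ ≤ (ν₀ : Measure Y).map p from
    (Measure.eq_of_le_of_measure_univ_eq hle (by simp)).symm
  refine Measure.le_iff.2 fun A hA => le_of_forall_lt fun r hr => ?_
  obtain ⟨F, hFA, hF, hrF, hK⟩ := exists_measurableSet_isCompact_preimage hp hfib hA hr
  have hμF : ∀ᶠ ν : ProbabilityMeasure Y in 𝓝[{ν | (ν : Measure Y).map p = μ}] ν₀,
      (ν : Measure Y) (p ⁻¹' F) = μ F :=
    eventually_mem_nhdsWithin.mono fun ν hν => by
      rw [← Measure.map_apply hp hF, mem_ofPred.1 hν]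
  calc r < μ F := hrF
    _ = limsup (fun ν : ProbabilityMeasure Y => (ν : Measure Y) (p ⁻¹' F)) _ := by
        rw [limsup_congr hμF, limsup_const]
    _ ≤ (ν₀ : Measure Y) (p ⁻¹' F) :=
        ProbabilityMeasure.limsup_measure_closed_le_of_tendsto
          (tendsto_id.mono_left nhdsWithin_le_nhds) hK.isClosed
    _ ≤ (ν₀ : Measure Y).map p A := by
        rw [Measure.map_apply hp hA]
        exact measure_mono (preimage_mono hFA)

theorem isCompact_lifts (hp : Measurable p) (hfib : ∀ᵐ x ∂μ, IsCompact (p ⁻¹' {x})) :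
    IsCompact {ν : ProbabilityMeasure Y | (ν : Measure Y).map p = μ} := by
  rw [← (isClosed_lifts hp hfib).closure_eq]
  refine isCompact_closure_of_isTightMeasureSet ((isTightMeasureSet_lifts hp hfib).subset ?_)
  rintro _ ⟨ν, hν, rfl⟩
  exact hν

end Lifts

section OrbitAverages

variable {Y : Type*} [MeasurableSpace Y]

/-- The Cesàro average `n⁻¹ ∑_{k < n} (S^k)_* ν` of the orbit of a measure `ν` under push-forward by
`S`. It is the zero measure for `n = 0`. -/
noncomputable def orbitAverage (S : Y → Y) (ν : Measure Y) (n : ℕ) : Measure Y :=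
  (n : ℝ≥0∞)⁻¹ • ∑ k ∈ Finset.range n, ν.map S^[k]

theorem map_orbitAverage {X : Type*} [MeasurableSpace X] {μ : Measure X} {S : Y → Y}
    {ν : Measure Y} {p : Y → X} (hp : Measurable p) (hν : ∀ k, (ν.map S^[k]).map p = μ) {n : ℕ}
    (hn : n ≠ 0) : (orbitAverage S ν n).map p = μ := by
  rw [orbitAverage, Measure.map_smul, ← Measure.mapₗ_apply_of_measurable hp, map_sum]
  simp_rw [Measure.mapₗ_apply_of_measurable hp, hν]
  rw [Finset.sum_const, Finset.card_range, ← Nat.cast_smul_eq_nsmul ℝ≥0∞, smul_smul,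
    ENNReal.inv_mul_cancel (by simpa) (by finiteness), one_smul]

variable [TopologicalSpace Y] [BorelSpace Y]

theorem integral_orbitAverage {S : Y → Y} (hS : Continuous S) (ν : Measure Y)
    [IsFiniteMeasure ν] (n : ℕ) (f : BoundedContinuousFunction Y ℝ) :
    ∫ y, f y ∂orbitAverage S ν n = (n : ℝ)⁻¹ * ∑ k ∈ Finset.range n, ∫ y, f (S^[k] y) ∂ν := by
  rw [orbitAverage, integral_smul_measure, integral_finsetSum_measure fun k _ => f.integrable _]
  congr 1
  · simp
  · exact Finset.sum_congr rfl fun k _ =>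
      integral_map (hS.iterate k).aemeasurable f.continuous.aestronglyMeasurable

theorem tendsto_integral_comp_sub_integral_orbitAverage {S : Y → Y} (hS : Continuous S)
    (ν : Measure Y) [IsFiniteMeasure ν] (f : BoundedContinuousFunction Y ℝ) :
    Tendsto (fun n => ∫ y, f (S y) ∂orbitAverage S ν n - ∫ y, f y ∂orbitAverage S ν n)
      atTop (𝓝 0) := by
  let a (k : ℕ) : ℝ := ∫ y, f (S^[k] y) ∂ν
  have hcomp (n : ℕ) : ∫ y, f (S y) ∂orbitAverage S ν n =
      (n : ℝ)⁻¹ * ∑ k ∈ Finset.range n, a (k + 1) := by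
    simpa only [BoundedContinuousFunction.compContinuous_apply, ContinuousMap.coe_mk,
      ← Function.iterate_succ_apply' S] using
      integral_orbitAverage hS ν n (f.compContinuous ⟨S, hS⟩)
  have htelescope (n : ℕ) : ∫ y, f (S y) ∂orbitAverage S ν n - ∫ y, f y ∂orbitAverage S ν n =
      (n : ℝ)⁻¹ * (a n - a 0) := by
    rw [hcomp, integral_orbitAverage hS, ← mul_sub, ← Finset.sum_sub_distrib,
      Finset.sum_range_sub a]
  have ha (k : ℕ) : ‖a k‖ ≤ ‖f‖ * ν.real univ :=
    norm_integral_le_of_norm_le_const (.of_forall fun y => f.norm_coe_le_norm _)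
  simp_rw [htelescope]
  refine tendsto_inv_atTop_nhds_zero_nat.zero_mul_isBoundedUnder_le (isBoundedUnder_of
    ⟨‖f‖ * ν.real univ + ‖f‖ * ν.real univ, fun n => ?_⟩)
  exact (norm_sub_le _ _).trans (add_le_add (ha n) (ha 0))

/-- The Krylov–Bogoliubov argument. -/
theorem exists_map_eq_self_of_isCompact [HasOuterApproxClosed Y] {S : Y → Y}
    (hS : Continuous S) {ν : Measure Y} [IsFiniteMeasure ν] {C : Set (ProbabilityMeasure Y)}
    (hC : IsCompact C) (hν : ∀ n ≠ 0, ∃ ρ ∈ C, (ρ : Measure Y) = orbitAverage S ν n) :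
    ∃ ρ ∈ C, (ρ : Measure Y).map S = ρ := by
  choose ρ hρC hρ using fun n : ℕ => hν (n + 1) n.succ_ne_zero
  obtain ⟨ρ₀, hρ₀C, hlim : Tendsto ρ (hyperfilter ℕ) (𝓝 ρ₀)⟩ :=
    hC.ultrafilter_le_nhds' ((hyperfilter ℕ).map ρ) (Ultrafilter.mem_map.2 (univ_mem' hρC))
  refine ⟨ρ₀, hρ₀C, ext_of_forall_integral_eq_of_IsFiniteMeasure fun f => ?_⟩
  rw [integral_map hS.aemeasurable f.continuous.aestronglyMeasurable]
  have hconv (g : BoundedContinuousFunction Y ℝ) :=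
    ProbabilityMeasure.tendsto_iff_forall_integral_tendsto.1 hlim g
  have hzero := ((tendsto_integral_comp_sub_integral_orbitAverage hS ν f).comp
    (tendsto_add_atTop_nat 1)).mono_left Nat.hyperfilter_le_atTop
  simp only [Function.comp_def, ← hρ] at hzero
  exact sub_eq_zero.1 (tendsto_nhds_unique
    ((hconv (f.compContinuous ⟨S, hS⟩)).sub (hconv f)) hzero)

end OrbitAverages

theorem map_map_iterate_eq {X Y : Type*} [MeasurableSpace X] [MeasurableSpace Y] {μ : Measure X}
    {T : X → X} (hT : AEMeasurable T μ) (hTμ : μ.map T = μ) {S : Y → Y} (hS : Measurable S)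
    {p : Y → X} (hp : Measurable p) (hcomm : ∀ᵐ x ∂μ, ∀ y, p y = x → p (S y) = T x)
    {ν : Measure Y} (hν : ν.map p = μ) (k : ℕ) : (ν.map S^[k]).map p = μ := by
  induction k with
  | zero => rwa [Function.iterate_zero, Measure.map_id]
  | succ k ih =>
    set ν' := ν.map S^[k]
    have hcomm' : p ∘ S =ᵐ[ν'] T ∘ p :=
      (ae_of_ae_map hp.aemeasurable (ih.symm ▸ hcomm)).mono fun y hy => hy y rfl
    have hT' : AEMeasurable T (ν'.map p) := ih.symm ▸ hT
    calc (ν.map S^[k + 1]).map p = ν'.map (p ∘ S) := by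
          rw [Function.iterate_succ', ← Measure.map_map hS (hS.iterate k), Measure.map_map hp hS]
      _ = (ν'.map p).map T := by
          rw [Measure.map_congr hcomm', hT'.map_map_of_aemeasurable hp.aemeasurable]
      _ = μ := by rw [ih, hTμ]

theorem lift_invariant_measure_of_compact_fibers_general
    {X : Type*} [MeasurableSpace X] [StandardBorelSpace X]
    (μ : Measure X) [IsProbabilityMeasure μ]
    {Y : Type*} [TopologicalSpace Y] [PolishSpace Y] [MeasurableSpace Y] [BorelSpace Y]
    (T : X → X) (hT : AEMeasurable T μ) (hTμ : μ.map T = μ)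
    (S : Y → Y) (hS : Continuous S)
    (p : Y → X) (hp : Measurable p)
    (hcomm : ∀ᵐ x ∂μ, ∀ y, p y = x → p (S y) = T x)
    (hfull : μ (Set.range p) = 1)
    (hfib : ∀ᵐ x ∂μ, IsCompact (p ⁻¹' {x})) :
    ∃ ν : Measure Y, IsProbabilityMeasure ν ∧ ν.map S = ν ∧ ν.map p = μ := by
  have hrange : ∀ᵐ x ∂μ, x ∈ range p := by
    have hmeas : NullMeasurableSet (range p) μ := image_univ ▸ nullMeasurableSet_image hp .univ
    exact (prob_compl_eq_zero_iff₀ hmeas).2 hfull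
  have : Nonempty Y := range_nonempty_iff_nonempty.1
    (nonempty_of_measure_ne_zero (hfull ▸ one_ne_zero))
  obtain ⟨s, hs, hps⟩ := exists_measurable_ae_rightInverse hp hrange
  have hlift : (μ.map s).map p = μ := by
    rw [Measure.map_map hp hs]
    exact (Measure.map_congr hps).trans Measure.map_id
  have hiter := map_map_iterate_eq hT hTμ hS.measurable hp hcomm hlift
  have haverage (n : ℕ) (hn : n ≠ 0) :
      ∃ ρ : ProbabilityMeasure Y, (ρ : Measure Y).map p = μ ∧ ρ = orbitAverage S (μ.map s) n := by
    have hmap := map_orbitAverage hp hiter hn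
    have : IsProbabilityMeasure ((orbitAverage S (μ.map s) n).map p) := by rwa [hmap]
    exact ⟨⟨orbitAverage S (μ.map s) n, Measure.isProbabilityMeasure_of_map p⟩, hmap, rfl⟩
  obtain ⟨ν, hνp, hνS⟩ := exists_map_eq_self_of_isCompact hS (isCompact_lifts hp hfib) haverage
  exact ⟨ν, inferInstance, hνS, hνp⟩

/-- **Theorem 1.1.** Let `X` be a standard Borel space with a Borel probability measure `μ`
and `T : X → X` a measurable map preserving `μ`. Let `Y` be a Polish space, `S : Y → Y`
continuous, and `p : Y → X` Borel with `p ∘ S = T ∘ p` and `μ (p '' univ) = 1`. If the fiber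
`p ⁻¹' {x}` is compact for `μ`-a.e. `x`, then `μ` lifts to an `S`-invariant Borel probability
measure `ν` on `Y`, i.e. `ν.map S = ν` and `ν.map p = μ`. -/
theorem lift_invariant_measure_of_compact_fibers
    {X : Type*} [MeasurableSpace X] [StandardBorelSpace X]
    (μ : Measure X) [IsProbabilityMeasure μ]
    {Y : Type*} [TopologicalSpace Y] [PolishSpace Y] [MeasurableSpace Y] [BorelSpace Y]
    (T : X → X) (hT : Measurable T) (hTμ : μ.map T = μ)
    (S : Y → Y) (hS : Continuous S)
    (p : Y → X) (hp : Measurable p)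
    (hcomm : p ∘ S = T ∘ p)
    (hfull : μ (Set.range p) = 1)
    (hfib : ∀ᵐ x ∂μ, IsCompact (p ⁻¹' {x})) :
    ∃ ν : Measure Y, IsProbabilityMeasure ν ∧ ν.map S = ν ∧ ν.map p = μ :=
  lift_invariant_measure_of_compact_fibers_general μ T hT.aemeasurable hTμ S hS p hp
    (.of_forall fun _ _ hy => hy ▸ congrFun hcomm _) hfull hfib
end

section
/- Let $X$ be a standard Borel space with a Borel probability measure $\mu$, let $Y$ be a compact metrizable space, and let $p: Y \to X$ be a Borel map such that $\mu(p(Y)) = 1$ and such that $p^{-1}(x)$ is compact for $\mu$-almost all $x \in X$. Suppose $\nu_1, \nu_2, \nu_3, \ldots$ is a sequence of Borel probability measures on $Y$ with $p_*\nu_n = \mu$ for all $n$, converging in the weak* topology to a Borel probability measure $\nu$. Then for every Borel set $A \subset X$ one has $p_*\nu(A) \ge \mu(A)$. -/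
open MeasureTheory Filter

/-!
For `U` in a countable basis of `Y`, the set `p '' U` of points whose fiber meets `U` contains a
Borel set `S U` such that almost every point of `U`, for all `ν n` at once, is mapped into `S U`.
Refine the Polish topology of `X` so that every `S U` becomes closed. Then the pairs `(x, y)` such
that `x ∈ S U` for every basic `U` containing `y` form a closed set, and such a pair satisfies
`p y = x` as soon as the fiber over `x` is closed. Projecting along a compact set `K` of points with
closed fibers shows that `p ⁻¹' K` is closed up to a set that is null for every `ν n`, so the
portmanteau theorem bounds the limit measure of `p ⁻¹' K` from below by `μ K`. Inner regularity of
`μ` gives `μ ≤ p_* νlim`, which is an equality since both are probability measures.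
-/

open Set TopologicalSpace
open scoped Topology ENNReal

theorem borelSpace_of_polishSpace_le {X : Type*} [m : MeasurableSpace X]
    {t t' : TopologicalSpace X} (ht : @PolishSpace X t) (hm : @BorelSpace X t m)
    (ht' : @PolishSpace X t') (hle : t' ≤ t) : @BorelSpace X t' m :=
  @BorelSpace.mk X t' m <| by rw [hm.measurable_eq, borel_eq_borel_of_le ht' ht hle]

theorem exists_polishSpace_forall_isClosed {X ι : Type*} [Countable ι] [m : MeasurableSpace X]
    [StandardBorelSpace X] {S : ι → Set X} (hS : ∀ i, MeasurableSet (S i)) :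
    ∃ t : TopologicalSpace X, @PolishSpace X t ∧ @BorelSpace X t m ∧ ∀ i, IsClosed[t] (S i) := by
  obtain ⟨t₀, hm, ht₀⟩ := StandardBorelSpace.polish (α := X)
  choose τ hτ_le hτ hclosed _ using fun i ↦ (hS i).isClopenable
  obtain ⟨t, htτ, hle, ht⟩ := PolishSpace.exists_polishSpace_forall_le τ hτ_le hτ
  exact ⟨t, ht, borelSpace_of_polishSpace_le ht₀ hm ht hle, fun i ↦ (hclosed i).mono (htτ i)⟩

theorem exists_polishSpace_continuous {X Y : Type*} [TopologicalSpace X]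
    [SecondCountableTopology X] [MeasurableSpace X] [OpensMeasurableSpace X]
    [m : MeasurableSpace Y] [StandardBorelSpace Y] {p : Y → X} (hp : Measurable p) :
    ∃ t : TopologicalSpace Y, @PolishSpace Y t ∧ @BorelSpace Y t m ∧ Continuous[t, _] p := by
  obtain ⟨t₀, hm, ht₀⟩ := StandardBorelSpace.polish (α := Y)
  obtain ⟨t, hle, hcont, ht⟩ := hp.exists_continuous
  exact ⟨t, ht, borelSpace_of_polishSpace_le ht₀ hm ht hle, hcont⟩

theorem exists_isSigmaCompact_subset_measure_sdiff_eq_zero {Y : Type*} [TopologicalSpace Y]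
    [T2Space Y] [MeasurableSpace Y] [OpensMeasurableSpace Y] {ν : Measure Y}
    [ν.InnerRegularCompactLTTop] {U : Set Y} (hU : MeasurableSet U) (hνU : ν U ≠ ∞) :
    ∃ K ⊆ U, IsSigmaCompact K ∧ ν (U \ K) = 0 := by
  choose K hKU hK hνK using fun k : ℕ ↦
    hU.exists_isCompact_sdiff_lt hνU (ENNReal.inv_ne_zero.2 (ENNReal.natCast_ne_top k))
  refine ⟨⋃ k, K k, iUnion_subset hKU, isSigmaCompact_iUnion_of_isCompact K hK, ?_⟩
  refine le_antisymm (ge_of_tendsto' ENNReal.tendsto_inv_nat_nhds_zero fun k ↦ ?_) bot_le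
  exact (measure_mono (sdiff_subset_sdiff_right (subset_iUnion K k))).trans (hνK k).le

theorem measurableSet_of_isSigmaCompact {X : Type*} [TopologicalSpace X] [T2Space X]
    [MeasurableSpace X] [OpensMeasurableSpace X] {S : Set X} (hS : IsSigmaCompact S) :
    MeasurableSet S := by
  obtain ⟨K, hK, rfl⟩ := hS
  exact .iUnion fun k ↦ (hK k).measurableSet

theorem exists_measurableSet_subset_image_forall_ae {X Y : Type*} [MeasurableSpace X]
    [StandardBorelSpace X] [MeasurableSpace Y] [StandardBorelSpace Y] {p : Y → X}
    (hp : Measurable p) (ν : Measure Y) [SFinite ν] {U : Set Y} (hU : MeasurableSet U) :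
    ∃ S ⊆ p '' U, MeasurableSet S ∧ ∀ᵐ y ∂ν, y ∈ U → p y ∈ S := by
  obtain ⟨_, _, _⟩ := StandardBorelSpace.polish (α := X)
  obtain ⟨_, _, _, hcont⟩ := exists_polishSpace_continuous hp
  obtain ⟨K, hKU, hK, hνK⟩ :=
    exists_isSigmaCompact_subset_measure_sdiff_eq_zero hU (measure_ne_top ν.toFinite U)
  refine ⟨p '' K, image_mono hKU, measurableSet_of_isSigmaCompact (hK.image hcont), ?_⟩
  rw [← ae_toFinite]
  filter_upwards [measure_eq_zero_iff_ae_notMem.1 hνK] with y hy hyU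
  exact mem_image_of_mem p (not_not.1 fun hyK ↦ hy ⟨hyU, hyK⟩)

section UpperSemicontinuity

variable {X Y ι : Type*} [TopologicalSpace Y] {p : Y → X} {U : ι → Set Y} {S : ι → Set X}

theorem eq_of_forall_mem_basis (hU : IsTopologicalBasis (range U)) (hSU : ∀ i, S i ⊆ p '' U i)
    {x : X} (hx : IsClosed (p ⁻¹' {x})) {y : Y} (hy : ∀ i, y ∈ U i → x ∈ S i) : p y = x := by
  suffices h : y ∈ closure (p ⁻¹' {x}) from hx.closure_subset h
  rw [hU.mem_closure_iff, forall_mem_range]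
  intro i hyi
  obtain ⟨z, hzi, hzx⟩ := hSU i (hy i hyi)
  exact ⟨z, hzi, hzx⟩

theorem isClosed_setOf_forall_mem_basis_inter_preimage [TopologicalSpace X]
    (hU : IsTopologicalBasis (range U)) (hS : ∀ i, IsClosed (S i)) (hSU : ∀ i, S i ⊆ p '' U i)
    {K : Set X} (hK : IsCompact K) (hfib : ∀ x ∈ K, IsClosed (p ⁻¹' {x})) :
    IsClosed ({y | ∀ i, y ∈ U i → p y ∈ S i} ∩ p ⁻¹' K) := by
  have : CompactSpace K := isCompact_iff_compactSpace.1 hK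
  let R : Set (K × Y) := {z | ∀ i, z.2 ∈ U i → (z.1 : X) ∈ S i}
  have hR : IsClosed R := by
    simp only [R, ofPred_forall]
    exact isClosed_iInter fun i ↦ isClosed_imp ((hU.isOpen ⟨i, rfl⟩).preimage continuous_snd)
      ((hS i).preimage (continuous_subtype_val.comp continuous_fst))
  convert isClosedMap_snd_of_compactSpace R hR using 1
  ext y
  constructor
  · rintro ⟨hy, hyK⟩
    exact ⟨(⟨p y, hyK⟩, y), hy, rfl⟩
  · rintro ⟨⟨x, y⟩, hxy, rfl⟩
    have hpy : p y = x := eq_of_forall_mem_basis hU hSU (hfib x x.2) hxy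
    exact ⟨fun i hyi ↦ hpy ▸ hxy i hyi, mem_preimage.2 (hpy ▸ x.2)⟩

end UpperSemicontinuity

section ClosedFibers

variable {X Y : Type*} [MeasurableSpace X] [StandardBorelSpace X] {μ : Measure X}
  [TopologicalSpace Y] [SecondCountableTopology Y] [MeasurableSpace Y] [BorelSpace Y]
  [StandardBorelSpace Y] {p : Y → X}

theorem exists_lt_measure_isClosed_ae_eq_preimage [IsFiniteMeasure μ] (hp : Measurable p)
    (hfib : ∀ᵐ x ∂μ, IsClosed (p ⁻¹' {x})) (ν : Measure Y) [SFinite ν] {A : Set X}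
    (hA : MeasurableSet A) {r : ℝ≥0∞} (hr : r < μ A) :
    ∃ K ⊆ A, MeasurableSet K ∧ r < μ K ∧ ∃ F ⊆ p ⁻¹' K, IsClosed F ∧ F =ᵐ[ν] p ⁻¹' K := by
  have hb : IsTopologicalBasis (range ((↑) : countableBasis Y → Set Y)) := by
    simpa using isBasis_countableBasis Y
  choose S hSU hS hνS using fun U : countableBasis Y ↦
    exists_measurableSet_subset_image_forall_ae hp ν (hb.isOpen ⟨U, rfl⟩).measurableSet
  obtain ⟨_, _, _, hS_closed⟩ := exists_polishSpace_forall_isClosed hS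
  obtain ⟨C, hCμ, hC, hC_fib⟩ := hfib.exists_measurable_mem
  rw [← measure_inter_conull (mem_ae_iff.1 hCμ)] at hr
  obtain ⟨K, hKAC, hK, hrK⟩ := (hA.inter hC).exists_lt_isCompact hr
  refine ⟨K, fun x hx ↦ (hKAC hx).1, hK.measurableSet, hrK, _, inter_subset_right,
    isClosed_setOf_forall_mem_basis_inter_preimage hb hS_closed hSU hK
      fun x hx ↦ hC_fib x (hKAC hx).2, ?_⟩
  exact inter_ae_eq_right_of_ae_eq_univ (eventuallyEq_univ.2 (ae_all_iff.2 hνS))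

theorem le_map_of_tendsto [HasOuterApproxClosed Y] [IsFiniteMeasure μ] (hp : Measurable p)
    (hfib : ∀ᵐ x ∂μ, IsClosed (p ⁻¹' {x})) {ν : ℕ → ProbabilityMeasure Y}
    (hν : ∀ n, (ν n).toMeasure.map p = μ) {νlim : ProbabilityMeasure Y}
    (hlim : Tendsto ν atTop (𝓝 νlim)) : μ ≤ νlim.toMeasure.map p := by
  refine Measure.le_iff.2 fun A hA ↦ le_of_forall_lt fun r hr ↦ ?_
  obtain ⟨K, hKA, hK, hrK, F, hFK, hF, hFν⟩ := exists_lt_measure_isClosed_ae_eq_preimage hp hfib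
    (Measure.sum fun n ↦ (ν n).toMeasure) hA hr
  have hνF (n : ℕ) : (ν n).toMeasure F = μ K := by
    rw [measure_congr (Measure.ae_sum_iff.1 hFν n), ← hν n, Measure.map_apply hp hK]
  calc
    r < μ K := hrK
    _ = limsup (fun n ↦ (ν n).toMeasure F) atTop := by simp only [hνF, limsup_const]
    _ ≤ νlim.toMeasure F := ProbabilityMeasure.limsup_measure_closed_le_of_tendsto hlim hF
    _ ≤ νlim.toMeasure (p ⁻¹' A) := measure_mono (hFK.trans (preimage_mono hKA))
    _ = νlim.toMeasure.map p A := (Measure.map_apply hp hA).symm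

variable [MetrizableSpace Y]

theorem isClosed_setOf_map_eq (hp : Measurable p) (hfib : ∀ᵐ x ∂μ, IsClosed (p ⁻¹' {x})) :
    IsClosed {ν : ProbabilityMeasure Y | ν.toMeasure.map p = μ} := by
  refine IsSeqClosed.isClosed fun ν νlim hν hlim ↦ ?_
  have hmap (ν : ProbabilityMeasure Y) : IsProbabilityMeasure (ν.toMeasure.map p) :=
    Measure.isProbabilityMeasure_map hp.aemeasurable
  have : IsProbabilityMeasure μ := hν 0 ▸ hmap (ν 0)
  exact (Measure.eq_of_le_of_isProbabilityMeasure (le_map_of_tendsto hp hfib hν hlim)).symm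

theorem map_limit_ge_of_map_eq_general {ι : Type*} {l : Filter ι} [l.NeBot] (hp : Measurable p)
    (hfib : ∀ᵐ x ∂μ, IsClosed (p ⁻¹' {x})) {ν : ι → ProbabilityMeasure Y}
    (hν : ∀ i, (ν i).toMeasure.map p = μ) {νlim : ProbabilityMeasure Y}
    (hlim : Tendsto ν l (𝓝 νlim)) : νlim.toMeasure.map p = μ :=
  (isClosed_setOf_map_eq hp hfib).mem_of_tendsto hlim (.of_forall hν)

end ClosedFibers

/-- Claim 1 in the proof of Lemma 3.1: with `Y` compact metrizable, `X` standard Borel with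
Borel probability measure `μ`, `p : Y → X` Borel with `μ (range p) = 1` and `μ`-a.e. compact
fibers, if `ν n` are Borel probability measures on `Y` with `p_* (ν n) = μ` converging weakly
to `νlim`, then `p_* νlim (A) ≥ μ (A)` for every Borel set `A ⊆ X`. -/
theorem map_limit_ge_of_map_eq
    {X : Type*} [MeasurableSpace X] [StandardBorelSpace X]
    (μ : Measure X) [IsProbabilityMeasure μ]
    {Y : Type*} [TopologicalSpace Y] [CompactSpace Y] [TopologicalSpace.MetrizableSpace Y]
    [MeasurableSpace Y] [BorelSpace Y]
    (p : Y → X) (hp : Measurable p)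
    (hfull : μ (Set.range p) = 1)
    (hfib : ∀ᵐ x ∂μ, IsCompact (p ⁻¹' {x}))
    (ν : ℕ → ProbabilityMeasure Y) (hν : ∀ n, (ν n).toMeasure.map p = μ)
    (νlim : ProbabilityMeasure Y) (hlim : Tendsto ν atTop (nhds νlim)) :
    ∀ A : Set X, MeasurableSet A → μ A ≤ (νlim.toMeasure.map p) A := by
  let := metrizableSpaceMetric Y
  exact fun A _ ↦
    (map_limit_ge_of_map_eq_general hp (hfib.mono fun _ hx ↦ hx.isClosed) hν hlim).ge A
end
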